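/- Let m ≥ 1 and let H be a nontrivial subgroup of the free group F_m. Then H is not conjugacy reduced if and only if there exists a letter x ∈ Σ such that every nonempty word of L_H ends with x (equivalently: H is conjugacy reduced if and only if there exist two words in L_H with different last letters). In particular, if every nonempty word of L_H ends with the same letter x, then every nonempty word of L_H begins with x⁻¹. -/

import Mathlib

/-- The language of reduced words over `Σ = A ∪ A⁻¹` (letters encoded as `Fin m × Bool`)
that represent elements of the subgroup `H` of the free group `F_m`. -/
def LH (m : ℕ) (H : Subgroup (FreeGroup (Fin m))) : Set (List (Fin m × Bool)) :=
  {w | FreeGroup.reduce w = w ∧ FreeGroup.mk w ∈ H}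

/-- `H ≤ F_m` is conjugacy reduced if there is no letter `x ∈ Σ` such that every
nonempty word of `L_H` begins with `x⁻¹` and ends with `x`.
(The inverse of a letter `(i, b)` is `(i, !b)`.) -/
def ConjugacyReduced (m : ℕ) (H : Subgroup (FreeGroup (Fin m))) : Prop :=
  ¬ ∃ x : Fin m × Bool, ∀ w ∈ LH m H, w ≠ [] →
      w.head? = some (x.1, !x.2) ∧ w.getLast? = some x

/-! Inverting a word reverses it and inverts its letters, and preserves reducedness. Hence the
language of a subgroup is closed under formal inversion, and the first letter of `w` is the inverse
of the last letter of `w⁻¹`, which is again a nonempty word of the language. -/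

section InverseWords

variable {α : Type*}

theorem invRev_ne_nil {w : List (α × Bool)} (hw : w ≠ []) : FreeGroup.invRev w ≠ [] :=
  FreeGroup.invRev_injective.ne hw

theorem head?_invRev (w : List (α × Bool)) :
    (FreeGroup.invRev w).head? = w.getLast?.map fun a => (a.1, !a.2) := by
  simp [FreeGroup.invRev]

theorem head?_eq_of_forall_getLast?_eq {L : Set (List (α × Bool))}
    (hL : ∀ w ∈ L, FreeGroup.invRev w ∈ L) {x : α × Bool}
    (hx : ∀ w ∈ L, w ≠ [] → w.getLast? = some x) {w : List (α × Bool)} (hw : w ∈ L)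
    (hne : w ≠ []) : w.head? = some (x.1, !x.2) :=
  calc
    w.head? = (FreeGroup.invRev (FreeGroup.invRev w)).head? := by rw [FreeGroup.invRev_invRev]
    _ = (FreeGroup.invRev w).getLast?.map fun a => (a.1, !a.2) := head?_invRev _
    _ = some (x.1, !x.2) := by rw [hx _ (hL w hw) (invRev_ne_nil hne), Option.map_some]

end InverseWords

section Subgroup

variable {α : Type*} [DecidableEq α]

/-- The language of reduced words representing elements of a subgroup `H` of a free group on an
arbitrary basis. For the basis `Fin m` it unfolds to `LH m H`. -/
def reducedWords (H : Subgroup (FreeGroup α)) : Set (List (α × Bool)) :=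
  {w | FreeGroup.reduce w = w ∧ FreeGroup.mk w ∈ H}

/-- The property of being conjugacy reduced, for subgroups of a free group on an arbitrary basis.
For the basis `Fin m` it unfolds to `ConjugacyReduced m H`. -/
def IsConjugacyReduced (H : Subgroup (FreeGroup α)) : Prop :=
  ¬ ∃ x : α × Bool, ∀ w ∈ reducedWords H, w ≠ [] →
      w.head? = some (x.1, !x.2) ∧ w.getLast? = some x

theorem invRev_mem_reducedWords {H : Subgroup (FreeGroup α)} {w : List (α × Bool)}
    (hw : w ∈ reducedWords H) : FreeGroup.invRev w ∈ reducedWords H := by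
  obtain ⟨hreduced, hmem⟩ := hw
  refine ⟨by rw [FreeGroup.reduce_invRev, hreduced], ?_⟩
  rw [← FreeGroup.inv_mk]
  exact H.inv_mem hmem

theorem not_conjugacyReduced_iff_general (H : Subgroup (FreeGroup α)) :
    (¬ IsConjugacyReduced H ↔
        ∃ x : α × Bool, ∀ w ∈ reducedWords H, w ≠ [] → w.getLast? = some x) ∧
      (∀ x : α × Bool, (∀ w ∈ reducedWords H, w ≠ [] → w.getLast? = some x) →
        ∀ w ∈ reducedWords H, w ≠ [] → w.head? = some (x.1, !x.2)) := by
  have head_of_last (x : α × Bool) (hx : ∀ w ∈ reducedWords H, w ≠ [] → w.getLast? = some x) :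
      ∀ w ∈ reducedWords H, w ≠ [] → w.head? = some (x.1, !x.2) :=
    fun _ => head?_eq_of_forall_getLast?_eq (fun _ => invRev_mem_reducedWords) hx
  refine ⟨?_, head_of_last⟩
  rw [IsConjugacyReduced, not_not]
  exact exists_congr fun x =>
    ⟨fun h w hw hne => (h w hw hne).2,
      fun h w hw hne => ⟨head_of_last x h w hw hne, h w hw hne⟩⟩

end Subgroup

/-- For a nontrivial subgroup `H ≤ F_m`: `H` fails to be conjugacy reduced iff there is a
letter `x` with which every nonempty word of `L_H` ends; moreover, if every nonempty word
of `L_H` ends with the letter `x`, then every nonempty word of `L_H` begins with `x⁻¹`. -/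
theorem not_conjugacyReduced_iff (m : ℕ) (hm : 1 ≤ m)
    (H : Subgroup (FreeGroup (Fin m))) (hnt : H ≠ ⊥) :
    (¬ ConjugacyReduced m H ↔
        ∃ x : Fin m × Bool, ∀ w ∈ LH m H, w ≠ [] → w.getLast? = some x) ∧
      (∀ x : Fin m × Bool, (∀ w ∈ LH m H, w ≠ [] → w.getLast? = some x) →
        ∀ w ∈ LH m H, w ≠ [] → w.head? = some (x.1, !x.2)) :=
  not_conjugacyReduced_iff_general H
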